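/- arXiv:1310.3213 — 2 statements merged into one kernel-verified Lean document; each statement's English description precedes it below -/
import Mathlib

section
/- Let λ, ν ∈ ℂ with ν - λ = 2l for a natural number l, and define the differential operator C̃_{λ,ν} = rest ∘ Σ_{j=0}^{l} (2^{2l-2j}/(j!(2l-2j)!)) ∏_{i=1}^{l-j}((λ+ν-n-1)/2 + i) · Δ_{ℝ^{n-1}}^j (∂/∂x_n)^{2l-2j}, where rest is restriction to x_n = 0. Then C̃_{λ,ν} applied to the function (1+|x|²+x_n²)^{-λ} and evaluated at x = 0 gives (-1)^l 2^{2l} (λ)_{2l}/l!. -/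
/-- The Euclidean Laplacian `Δ = Σ ∂²/∂x_i²` of a complex-valued function on `ℝ^m`. -/
noncomputable def laplacianC (m : ℕ) (f : EuclideanSpace ℝ (Fin m) → ℂ)
    (x : EuclideanSpace ℝ (Fin m)) : ℂ :=
  ∑ i : Fin m,
    fderiv ℝ (fun y => fderiv ℝ f y (EuclideanSpace.single i (1 : ℝ))) x
      (EuclideanSpace.single i (1 : ℝ))

/-!
On a `d`-dimensional Euclidean space `Δ (a + ‖x‖²)^{-λ}` is a combination of
`(a + ‖x‖²)^{-λ-1}` and `(a + ‖x‖²)^{-λ-2}`, and the resulting recursion gives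
`Δ^j (a + ‖x‖²)^{-λ} = (-4)^j (d/2)_j (λ)_j a^{-λ-j}` at the origin. This computes both the normal
derivative `(∂/∂t)^{2k} = Δ_ℝ^k` (with `d = 1` and `a = 1 + ‖x‖²`) and the tangential one (with
`a = 1`). For `j + k = l` the two Pochhammer symbols of `λ` combine to `(λ)_l`, independently of
`j`, so that the sum over `j` is the Chu–Vandermonde sum for `(λ + l)_l`.
-/

section Pochhammer

open Finset Polynomial

theorem ascPochhammer_eval_eq_prod_range {R : Type*} [CommSemiring R] (n : ℕ) (r : R) :
    (ascPochhammer R n).eval r = ∏ i ∈ range n, (r + i) := by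
  induction n with
  | zero => simp
  | succ n ih => rw [ascPochhammer_succ_eval, ih, prod_range_succ]

theorem ascPochhammer_eval_mul_eval_add {R : Type*} [CommSemiring R] (n m : ℕ) (r : R) :
    (ascPochhammer R n).eval r * (ascPochhammer R m).eval (r + n) =
      (ascPochhammer R (n + m)).eval r := by
  simp [← ascPochhammer_mul, eval_comp]

theorem mul_ascPochhammer_eval_add_one {R : Type*} [CommSemiring R] (n : ℕ) (r : R) :
    r * (ascPochhammer R n).eval (r + 1) = (ascPochhammer R (n + 1)).eval r := by
  simpa [add_comm] using ascPochhammer_eval_mul_eval_add 1 n r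

theorem ascPochhammer_eval_add {R : Type*} [CommRing R] (n : ℕ) (r s : R) :
    (ascPochhammer R n).eval (r + s) = ∑ ij ∈ antidiagonal n,
      n.choose ij.1 * ((ascPochhammer R ij.1).eval r * (ascPochhammer R ij.2).eval s) := by
  have asc_eq (k : ℕ) (t : R) :
      (ascPochhammer R k).eval t = (-1) ^ k * (descPochhammer ℤ k).smeval (-t) := by
    rw [← neg_neg t, ascPochhammer_eval_neg_eq_descPochhammer, neg_neg,
      descPochhammer_eval_eq_ascPochhammer, descPochhammer_smeval_eq_ascPochhammer,
      ascPochhammer_smeval_eq_eval]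
  rw [asc_eq, neg_add, Ring.descPochhammer_smeval_add n (Commute.all _ _), mul_sum]
  refine sum_congr rfl fun ij hij => ?_
  rw [asc_eq, asc_eq, ← mem_antidiagonal.mp hij, pow_add]
  ring

theorem four_pow_mul_factorial_mul_ascPochhammer_eval_half {K : Type*} [Field K] [CharZero K]
    (k : ℕ) : 4 ^ k * (k.factorial : K) * (ascPochhammer K k).eval (1 / 2) =
      (2 * k).factorial := by
  induction k with
  | zero => simp
  | succ k ih =>
    rw [ascPochhammer_succ_eval, show 2 * (k + 1) = 2 * k + 1 + 1 by ring]
    simp only [Nat.factorial_succ]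
    push_cast
    rw [← ih]
    ring

theorem sum_four_pow_div_mul_ascPochhammer_eval {K : Type*} [Field K] [CharZero K]
    (l : ℕ) (p q : K) :
    ∑ j ∈ range (l + 1), 4 ^ (l - j) / ((j.factorial : K) * (2 * (l - j)).factorial) *
        (ascPochhammer K (l - j)).eval q *
        ((ascPochhammer K j).eval p * (ascPochhammer K (l - j)).eval (1 / 2)) =
      (ascPochhammer K l).eval (p + q) / l.factorial := by
  rw [ascPochhammer_eval_add, sum_div, ← Nat.sum_antidiagonal_eq_sum_range_succ (fun j k =>
    4 ^ k / ((j.factorial : K) * (2 * k).factorial) * (ascPochhammer K k).eval q *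
      ((ascPochhammer K j).eval p * (ascPochhammer K k).eval (1 / 2)))]
  refine sum_congr rfl fun ⟨j, k⟩ hjk => ?_
  obtain rfl : j + k = l := mem_antidiagonal.mp hjk
  have factorial_ne_zero (i : ℕ) : (i.factorial : K) ≠ 0 := Nat.cast_ne_zero.mpr i.factorial_ne_zero
  have hk := factorial_ne_zero k
  have half_eq : (ascPochhammer K k).eval (1 / 2) = (2 * k).factorial / (4 ^ k * k.factorial) :=
    eq_div_of_mul_eq (by simp [hk])
      (by rw [← four_pow_mul_factorial_mul_ascPochhammer_eval_half, mul_comm])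
  rw [half_eq, Nat.cast_add_choose]
  field_simp [factorial_ne_zero]

end Pochhammer

section Laplacian

open InnerProductSpace Laplacian Module
open scoped ContDiff Topology

variable {E F : Type*} [NormedAddCommGroup E] [InnerProductSpace ℝ E]
  [NormedAddCommGroup F] [NormedSpace ℝ F]

theorem hasFDerivAt_comp_norm_sq {f : ℝ → F} {f' : F} {x : E}
    (hf : HasDerivAt f f' (‖x‖ ^ 2)) :
    HasFDerivAt (fun y : E => f (‖y‖ ^ 2)) ((innerSL ℝ x).smulRight ((2 : ℝ) • f')) x := by
  convert! hf.hasFDerivAt.comp x (hasStrictFDerivAt_norm_sq x).hasFDerivAt using 1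
  ext v
  simp [two_smul]

variable [FiniteDimensional ℝ E]

theorem contDiff_laplacian {f : E → F} (hf : ContDiff ℝ ∞ f) : ContDiff ℝ ∞ (Δ f) := by
  rw [laplacian_eq_iteratedFDeriv_stdOrthonormalBasis]
  refine ContDiff.sum fun i _ => ?_
  exact (ContinuousMultilinearMap.apply ℝ (fun _ : Fin 2 => E) F _).contDiff.comp
    (hf.iteratedFDeriv_right (mod_cast le_rfl))

theorem iterate_laplacian_add {f g : E → F} (hf : ContDiff ℝ ∞ f) (hg : ContDiff ℝ ∞ g) (j : ℕ) :
    Δ^[j] (f + g) = Δ^[j] f + Δ^[j] g := by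
  induction j generalizing f g with
  | zero => rfl
  | succ j ih =>
    have laplacian_add : Δ (f + g) = Δ f + Δ g := funext fun _ =>
      (contDiff_infty.mp hf 2).contDiffAt.laplacian_add (contDiff_infty.mp hg 2).contDiffAt
    simp only [Function.iterate_succ_apply]
    rw [laplacian_add, ih (contDiff_laplacian hf) (contDiff_laplacian hg)]

theorem iterate_laplacian_const_smul {𝕜 : Type*} [NontriviallyNormedField 𝕜] [NormedAlgebra ℝ 𝕜]
    [NormedSpace 𝕜 F] [IsScalarTower ℝ 𝕜 F] (c : 𝕜) {f : E → F} (hf : ContDiff ℝ ∞ f) (j : ℕ) :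
    Δ^[j] (c • f) = c • Δ^[j] f := by
  induction j generalizing f with
  | zero => rfl
  | succ j ih =>
    have laplacian_smul : Δ (c • f) = c • Δ f :=
      funext fun _ => laplacian_smul c (contDiff_infty.mp hf 2).contDiffAt
    simp only [Function.iterate_succ_apply]
    rw [laplacian_smul, ih (contDiff_laplacian hf)]

theorem iteratedDeriv_two_mul_eq_iterate_laplacian (k : ℕ) (f : ℝ → F) :
    iteratedDeriv (2 * k) f = Δ^[k] f := by
  induction k generalizing f with
  | zero => simp
  | succ k ih =>
    have laplacian_eq : Δ f = deriv (deriv f) := by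
      funext t
      rw [laplacian_eq_iteratedDeriv_real, iteratedDeriv_succ, iteratedDeriv_one]
    rw [show 2 * (k + 1) = 2 * k + 1 + 1 by ring, iteratedDeriv_succ', iteratedDeriv_succ', ih,
      Function.iterate_succ_apply, laplacian_eq]

theorem laplacian_comp_norm_sq {f f' : ℝ → F} {f'' : F} {x : E}
    (hf : ∀ᶠ s in 𝓝 (‖x‖ ^ 2), HasDerivAt f (f' s) s) (hf' : HasDerivAt f' f'' (‖x‖ ^ 2)) :
    Δ (fun y : E => f (‖y‖ ^ 2)) x =
      (2 * finrank ℝ E : ℝ) • f' (‖x‖ ^ 2) + (4 * ‖x‖ ^ 2) • f'' := by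
  have first_deriv : fderiv ℝ (fun y : E => f (‖y‖ ^ 2)) =ᶠ[𝓝 x]
      fun y => (innerSL ℝ y).smulRight ((2 : ℝ) • f' (‖y‖ ^ 2)) := by
    have tendsto_norm_sq : ContinuousAt (fun y : E => ‖y‖ ^ 2) x := by fun_prop
    filter_upwards [tendsto_norm_sq.eventually hf] with y hy
    exact (hasFDerivAt_comp_norm_sq hy).fderiv
  have second_deriv (v : E) : fderiv ℝ (fderiv ℝ fun y : E => f (‖y‖ ^ 2)) x v v =
      (2 * ‖v‖ ^ 2) • f' (‖x‖ ^ 2) + (4 * inner ℝ x v ^ 2) • f'' := by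
    rw [first_deriv.fderiv_eq]
    have h := (ContinuousLinearMap.smulRightL ℝ E F).hasFDerivAt_of_bilinear
      (innerSL ℝ (E := E)).hasFDerivAt ((hasFDerivAt_comp_norm_sq hf').const_smul (2 : ℝ))
    refine (congrArg (· v v) h.fderiv).trans ?_
    change inner ℝ x v • (2 : ℝ) • inner ℝ x v • (2 : ℝ) • f'' +
      inner ℝ v v • (2 : ℝ) • f' (‖x‖ ^ 2) = _
    rw [real_inner_self_eq_norm_sq]
    module
  rw [laplacian_eq_iteratedFDeriv_stdOrthonormalBasis]
  simp only [iteratedFDeriv_two_apply, Matrix.cons_val_zero, Matrix.cons_val_one, second_deriv,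
    OrthonormalBasis.norm_eq_one, Finset.sum_add_distrib, ← Finset.sum_smul, ← Finset.mul_sum,
    OrthonormalBasis.sum_sq_inner_left]
  simp [mul_comm]

theorem laplacianC_eq_laplacian {m : ℕ} {f : EuclideanSpace ℝ (Fin m) → ℂ}
    (hf : ContDiff ℝ 2 f) : laplacianC m f = Δ f := by
  rw [laplacian_eq_iteratedFDeriv_orthonormalBasis f (EuclideanSpace.basisFun (Fin m) ℝ)]
  funext x
  have hf' : DifferentiableAt ℝ (fderiv ℝ f) x :=
    (hf.fderiv_right (m := 1) (by norm_num)).differentiable (by simp) x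
  refine Finset.sum_congr rfl fun i _ => ?_
  rw [fderiv_clm_apply hf' (differentiableAt_const _)]
  simp [iteratedFDeriv_two_apply]

theorem iterate_laplacianC_eq_iterate_laplacian {m : ℕ} {f : EuclideanSpace ℝ (Fin m) → ℂ}
    (hf : ContDiff ℝ ∞ f) (j : ℕ) : (laplacianC m)^[j] f = Δ^[j] f := by
  induction j generalizing f with
  | zero => rfl
  | succ j ih =>
    rw [Function.iterate_succ_apply, Function.iterate_succ_apply,
      laplacianC_eq_laplacian (contDiff_infty.mp hf 2),
      ih (contDiff_laplacian hf)]

end Laplacian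

section RadialCpow

open InnerProductSpace Laplacian Module
open scoped ContDiff Topology

variable {E : Type*} [NormedAddCommGroup E] {a : ℝ}

/-- The function `x ↦ (a + ‖x‖²)^{-λ}`, meant for `a > 0`. The case `a = 1` is the restriction of
`(1 + |x|² + x_n²)^{-λ}` to `x_n = 0`, and `a = 1 + |x|²`, with `E = ℝ`, its restriction to a line
normal to `x_n = 0`. -/
noncomputable def radialCpow (a : ℝ) (lam : ℂ) (x : E) : ℂ :=
  ((a + ‖x‖ ^ 2 : ℝ) : ℂ) ^ (-lam)

theorem radialCpow_zero (a : ℝ) (lam : ℂ) : radialCpow a lam (0 : E) = (a : ℂ) ^ (-lam) := by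
  simp [radialCpow]

theorem ofReal_mul_cpow_neg_add_one {s : ℝ} (hs : 0 < s) (lam : ℂ) :
    (s : ℂ) * (s : ℂ) ^ (-(lam + 1)) = (s : ℂ) ^ (-lam) := by
  have hs' : (s : ℂ) ≠ 0 := Complex.ofReal_ne_zero.mpr hs.ne'
  rw [neg_add', Complex.cpow_sub _ _ hs', Complex.cpow_one, mul_div_cancel₀ _ hs']

variable [InnerProductSpace ℝ E]

theorem contDiff_radialCpow (ha : 0 < a) (lam : ℂ) :
    ContDiff ℝ ∞ (radialCpow a lam : E → ℂ) := by
  have pos (x : E) : 0 < a + ‖x‖ ^ 2 := by positivity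
  have eq_exp : (radialCpow a lam : E → ℂ) =
      fun x => Complex.exp ((Real.log (a + ‖x‖ ^ 2) : ℂ) * -lam) := by
    funext x
    rw [radialCpow, Complex.cpow_def_of_ne_zero (Complex.ofReal_ne_zero.mpr (pos x).ne'),
      Complex.ofReal_log (pos x).le]
  rw [eq_exp]
  have contDiff_log : ContDiff ℝ ∞ fun x : E => Real.log (a + ‖x‖ ^ 2) :=
    (contDiff_const.add (contDiff_norm_sq ℝ)).log fun x => (pos x).ne'
  exact ((Complex.ofRealCLM.contDiff.comp contDiff_log).mul contDiff_const).cexp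

theorem hasDerivAt_ofReal_add_cpow_neg {s : ℝ} (hs : 0 < a + s) (lam : ℂ) :
    HasDerivAt (fun s : ℝ => ((a + s : ℝ) : ℂ) ^ (-lam))
      (-lam * ((a + s : ℝ) : ℂ) ^ (-(lam + 1))) s := by
  have h' := ((hasDerivAt_id ((a + s : ℝ) : ℂ)).cpow_const (c := -lam)
    (Complex.ofReal_mem_slitPlane.mpr hs)).comp_ofReal.comp_const_add a s
  simpa [sub_eq_add_neg, add_comm] using h'

theorem laplacian_radialCpow [FiniteDimensional ℝ E] (ha : 0 < a) (lam : ℂ) :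
    Δ (radialCpow a lam : E → ℂ) =
      (4 * lam * (lam + 1) - 2 * lam * finrank ℝ E) • radialCpow a (lam + 1) +
        (-4 * lam * (lam + 1) * a) • radialCpow a (lam + 1 + 1) := by
  funext x
  have hpos : 0 < a + ‖x‖ ^ 2 := by positivity
  have first_deriv : ∀ᶠ s in 𝓝 (‖x‖ ^ 2), HasDerivAt (fun s : ℝ => ((a + s : ℝ) : ℂ) ^ (-lam))
      (-lam * ((a + s : ℝ) : ℂ) ^ (-(lam + 1))) s := by
    filter_upwards [(continuous_const.add continuous_id).continuousAt.eventually
      (lt_mem_nhds hpos)] with s hs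
    exact hasDerivAt_ofReal_add_cpow_neg hs lam
  have second_deriv := (hasDerivAt_ofReal_add_cpow_neg hpos (lam + 1)).const_mul (-lam)
  refine (laplacian_comp_norm_sq first_deriv second_deriv).trans ?_
  simp only [radialCpow, Pi.add_apply, Pi.smul_apply, smul_eq_mul, Complex.real_smul,
    ← ofReal_mul_cpow_neg_add_one hpos (lam + 1)]
  push_cast
  ring

theorem iterate_laplacian_radialCpow_zero [FiniteDimensional ℝ E] (ha : 0 < a) (j : ℕ) (lam : ℂ) :
    Δ^[j] (radialCpow a lam : E → ℂ) 0 =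
      (-4) ^ j * (ascPochhammer ℂ j).eval (finrank ℝ E / 2 : ℂ) * (ascPochhammer ℂ j).eval lam *
        (a : ℂ) ^ (-(lam + j)) := by
  induction j generalizing lam with
  | zero => simp [radialCpow_zero]
  | succ j ih =>
    have contDiff_smul (c μ : ℂ) : ContDiff ℝ ∞ (c • (radialCpow a μ : E → ℂ)) :=
      contDiff_const.smul (contDiff_radialCpow ha μ)
    have cpow_eq : (a : ℂ) * (a : ℂ) ^ (-(lam + 1 + 1 + j)) = (a : ℂ) ^ (-(lam + 1 + j)) := by
      rw [add_right_comm (lam + 1), ofReal_mul_cpow_neg_add_one ha]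
    have pochhammer_shift : (lam + 1) * (ascPochhammer ℂ j).eval (lam + 1 + 1) =
        (ascPochhammer ℂ j).eval (lam + 1) * (lam + 1 + j) := by
      rw [mul_ascPochhammer_eval_add_one, ascPochhammer_succ_eval]
    rw [Function.iterate_succ_apply, laplacian_radialCpow ha,
      iterate_laplacian_add (contDiff_smul _ _) (contDiff_smul _ _),
      iterate_laplacian_const_smul _ (contDiff_radialCpow ha _),
      iterate_laplacian_const_smul _ (contDiff_radialCpow ha _)]
    simp only [Pi.add_apply, Pi.smul_apply, smul_eq_mul, ih]
    rw [← mul_ascPochhammer_eval_add_one j lam, ascPochhammer_succ_eval, Nat.cast_succ,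
      add_comm (j : ℂ) 1, ← add_assoc, ← cpow_eq]
    linear_combination (-4 * lam * a * (-4) ^ j * (ascPochhammer ℂ j).eval (finrank ℝ E / 2 : ℂ) *
      (a : ℂ) ^ (-(lam + 1 + 1 + j))) * pochhammer_shift

theorem iteratedDeriv_two_mul_cpow_add_sq_zero (ha : 0 < a) (k : ℕ) (lam : ℂ) :
    iteratedDeriv (2 * k) (fun t : ℝ => ((a + t ^ 2 : ℝ) : ℂ) ^ (-lam)) 0 =
      (-4) ^ k * (ascPochhammer ℂ k).eval (1 / 2) * (ascPochhammer ℂ k).eval lam *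
        (a : ℂ) ^ (-(lam + k)) := by
  have radialCpow_real : (fun t : ℝ => ((a + t ^ 2 : ℝ) : ℂ) ^ (-lam)) = radialCpow a lam := by
    funext t
    rw [radialCpow, Real.norm_eq_abs, sq_abs]
  rw [radialCpow_real, iteratedDeriv_two_mul_eq_iterate_laplacian (F := ℂ),
    iterate_laplacian_radialCpow_zero ha, finrank_self, Nat.cast_one]

theorem iteratedDeriv_two_mul_cpow_add_norm_sq {G : Type*} [NormedAddCommGroup G] (ha : 0 < a)
    (k : ℕ) (lam : ℂ) :
    (fun x : G => iteratedDeriv (2 * k)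
        (fun t : ℝ => ((a + ‖x‖ ^ 2 + t ^ 2 : ℝ) : ℂ) ^ (-lam)) 0) =
      ((-4) ^ k * (ascPochhammer ℂ k).eval (1 / 2) * (ascPochhammer ℂ k).eval lam) •
        radialCpow a (lam + k) :=
  funext fun _ => iteratedDeriv_two_mul_cpow_add_sq_zero (by positivity) k lam

theorem contDiff_iteratedDeriv_two_mul_cpow_add_norm_sq (ha : 0 < a) (k : ℕ) (lam : ℂ) :
    ContDiff ℝ ∞ fun x : E => iteratedDeriv (2 * k)
      (fun t : ℝ => ((a + ‖x‖ ^ 2 + t ^ 2 : ℝ) : ℂ) ^ (-lam)) 0 := by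
  rw [iteratedDeriv_two_mul_cpow_add_norm_sq ha]
  exact contDiff_const.smul (contDiff_radialCpow ha _)

theorem iterate_laplacian_iteratedDeriv_two_mul_cpow_zero [FiniteDimensional ℝ E] (ha : 0 < a)
    (j k : ℕ) (lam : ℂ) :
    Δ^[j] (fun x : E => iteratedDeriv (2 * k)
        (fun t : ℝ => ((a + ‖x‖ ^ 2 + t ^ 2 : ℝ) : ℂ) ^ (-lam)) 0) 0 =
      (-4) ^ (k + j) * (ascPochhammer ℂ (k + j)).eval lam *
        ((ascPochhammer ℂ j).eval (finrank ℝ E / 2 : ℂ) * (ascPochhammer ℂ k).eval (1 / 2)) *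
          (a : ℂ) ^ (-(lam + k + j)) := by
  rw [iteratedDeriv_two_mul_cpow_add_norm_sq ha,
    iterate_laplacian_const_smul _ (contDiff_radialCpow ha _), Pi.smul_apply, smul_eq_mul,
    iterate_laplacian_radialCpow_zero ha, ← ascPochhammer_eval_mul_eval_add]
  ring

theorem stmt_8_general [FiniteDimensional ℝ E] (l : ℕ) (lam ν : ℂ) (hν : ν - lam = 2 * l) :
    ∑ j ∈ Finset.range (l + 1),
        ((2 : ℂ) ^ (2 * (l - j)) / ((j.factorial : ℂ) * ((2 * (l - j)).factorial : ℂ))) *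
          (∏ i ∈ Finset.range (l - j), ((lam + ν - finrank ℝ E) / 2 + i)) *
          Δ^[j] (fun x : E => iteratedDeriv (2 * (l - j))
            (fun t : ℝ => ((1 + ‖x‖ ^ 2 + t ^ 2 : ℝ) : ℂ) ^ (-lam)) 0) 0 =
      (-1) ^ l * (2 : ℂ) ^ (2 * l) *
        (∏ i ∈ Finset.range (2 * l), (lam + i)) / (l.factorial : ℂ) := by
  set p : ℂ := finrank ℝ E / 2 with hp
  set q : ℂ := (lam + ν - finrank ℝ E) / 2 with hq
  have hpq : p + q = lam + l := by linear_combination hp + hq + hν / 2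
  have four_pow (k : ℕ) : (2 : ℂ) ^ (2 * k) = 4 ^ k := by rw [pow_mul]; norm_num
  simp only [← ascPochhammer_eval_eq_prod_range, four_pow]
  calc
    _ = ∑ j ∈ Finset.range (l + 1), (-4) ^ l * (ascPochhammer ℂ l).eval lam *
          (4 ^ (l - j) / ((j.factorial : ℂ) * (2 * (l - j)).factorial) *
            (ascPochhammer ℂ (l - j)).eval q *
            ((ascPochhammer ℂ j).eval p * (ascPochhammer ℂ (l - j)).eval (1 / 2))) := by
      refine Finset.sum_congr rfl fun j hj => ?_
      rw [iterate_laplacian_iteratedDeriv_two_mul_cpow_zero one_pos,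
        Nat.sub_add_cancel (Finset.mem_range_succ_iff.mp hj), Complex.ofReal_one, Complex.one_cpow]
      ring
    _ = (-4) ^ l * (ascPochhammer ℂ l).eval lam *
          ((ascPochhammer ℂ l).eval (lam + l) / l.factorial) := by
      rw [← Finset.mul_sum, sum_four_pow_div_mul_ascPochhammer_eval, hpq]
    _ = _ := by
      rw [two_mul l, ← ascPochhammer_eval_mul_eval_add, neg_pow]
      ring

end RadialCpow

theorem stmt_8 (n : ℕ) (hn : 2 ≤ n) (l : ℕ) (lam ν : ℂ) (hν : ν - lam = 2 * l) :
    ∑ j ∈ Finset.range (l + 1),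
        ((2 : ℂ) ^ (2 * l - 2 * j) /
            ((j.factorial : ℂ) * ((2 * l - 2 * j).factorial : ℂ))) *
          (∏ i ∈ Finset.range (l - j), ((lam + ν - n - 1) / 2 + (i + 1))) *
          ((laplacianC (n - 1))^[j]
            (fun x : EuclideanSpace ℝ (Fin (n - 1)) =>
              iteratedDeriv (2 * l - 2 * j)
                (fun t : ℝ => ((1 + ‖x‖ ^ 2 + t ^ 2 : ℝ) : ℂ) ^ (-lam)) 0) 0) =
      (-1) ^ l * (2 : ℂ) ^ (2 * l) *
        (∏ i ∈ Finset.range (2 * l), (lam + i)) / (l.factorial : ℂ) := by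
  have factor_eq (i : ℕ) :
      (lam + ν - n - 1) / 2 + (i + 1 : ℂ) = (lam + ν - (n - 1 : ℕ)) / 2 + i := by
    rw [Nat.cast_pred (by lia)]
    ring
  simpa only [← Nat.mul_sub, factor_eq, finrank_euclideanSpace_fin,
    iterate_laplacianC_eq_iterate_laplacian
      (contDiff_iteratedDeriv_two_mul_cpow_add_norm_sq one_pos _ lam)] using
    stmt_8_general (E := EuclideanSpace ℝ (Fin (n - 1))) l lam ν hν
end

section
/- For ν ∈ ℂ and m ≥ 1, the Fourier transform on ℝ^m of (|x|²+t²)^λ (for fixed real t ≠ 0 and Re λ < -m/2) is ∫_{ℝ^m}(|x|²+t²)^λ e^{-i⟨x,ξ⟩}dx = (2|t|^{m+2λ} π^{m/2}/Γ(-λ)) K̃_{m/2+λ}(|tξ|), where K̃_ν(z) = (z/2)^{-ν} K_ν(z) is the renormalized K-Bessel function; moreover K̃_ν(z) = (z/2)^{-2ν} K̃_{-ν}(z). -/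
open MeasureTheory
open scoped InnerProductSpace

/-- The modified Bessel function of the first kind `I_ν(z)` for `z > 0`, via its
power series. -/
noncomputable def besselI (ν : ℂ) (z : ℝ) : ℂ :=
  ((z : ℂ) / 2) ^ ν *
    ∑' j : ℕ, ((z : ℂ) / 2) ^ (2 * j) / ((j.factorial : ℂ) * Complex.Gamma ((j : ℂ) + ν + 1))

/-- The modified Bessel function of the second kind,
`K_ν(z) = (π/(2 sin νπ))(I_{-ν}(z) - I_ν(z))`. -/
noncomputable def besselK (ν : ℂ) (z : ℝ) : ℂ :=
  (Real.pi : ℂ) / (2 * Complex.sin (ν * Real.pi)) * (besselI (-ν) z - besselI ν z)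

/-- The renormalized K-Bessel function `K̃_ν(z) = (z/2)^{-ν} K_ν(z)`. -/
noncomputable def besselKt (ν : ℂ) (z : ℝ) : ℂ := ((z : ℂ) / 2) ^ (-ν) * besselK ν z

/-!
Writing `(|x|² + t²) ^ λ` as a Gamma integral turns it into a superposition of Gaussians, so Fubini
reduces its Fourier transform to the integral `G_μ(b) = ∫₀^∞ u^(μ-1) e^(-u - b/u) du`. It remains to
express `G_μ` through the power series `F_c(w) = ∑ wⁿ / (n! Γ(c + n))` that defines `I_ν`.

The Wronskian `G_μ F_μ + b G_(μ-1) F_(μ+1)` is constant in `b` and `1`-periodic in `μ`. Letting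
`b → 0` where `re μ > 1` shows that it is `1`. Together with the same identity at `1 - μ` and the
symmetry `G_μ(b) = b^μ G_(-μ)(b)` this is a linear system for `G_μ` and `G_(μ-1)` with determinant
`sin(πμ) / π`, and Cramer's rule gives the combination of `I_ν` and `I_(-ν)` that defines `K_ν`.
-/

section RegularizedHypergeometric

open Complex
open scoped Real

lemma natCast_add_one_mul_regularizedHGFunCoeff_add_one (b : Multiset ℂ) (n : ℕ) :
    (n + 1 : ℂ) * regularizedHGFunCoeff 0 b (n + 1) =
      regularizedHGFunCoeff 0 (b.map (· + 1)) n := by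
  have hn : (n + 1 : ℂ) ≠ 0 := n.cast_add_one_ne_zero
  simp only [regularizedHGFunCoeff, Multiset.map_zero, Multiset.prod_zero, Multiset.map_map,
    Function.comp_apply, Nat.factorial_succ, Nat.cast_mul, Nat.cast_add_one, mul_one_div]
  rw [mul_assoc, div_mul_cancel_left₀ hn, one_div]
  simp only [add_assoc, add_comm (1 : ℂ)]

lemma hasFPowerSeriesOnBall_regularizedHGFun {a b : Multiset ℂ} (hab : a.card ≤ b.card) :
    HasFPowerSeriesOnBall (regularizedHGFun a b) (regularizedHGFunSeries a b) 0 ⊤ := by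
  rw [← radius_regularizedHGFunSeries_eq_top hab]
  refine FormalMultilinearSeries.hasFPowerSeriesOnBall _ ?_
  simp [radius_regularizedHGFunSeries_eq_top hab]

lemma hasSum_regularizedHGFun {a b : Multiset ℂ} (hab : a.card ≤ b.card) (w : ℂ) :
    HasSum (fun n ↦ w ^ n * regularizedHGFunCoeff a b n) (regularizedHGFun a b w) := by
  simpa using (hasFPowerSeriesOnBall_regularizedHGFun hab).hasSum (y := w) (by simp)

lemma hasDerivAt_regularizedHGFun_zero_left (b : Multiset ℂ) (w : ℂ) :
    HasDerivAt (regularizedHGFun 0 b) (regularizedHGFun 0 (b.map (· + 1)) w) w := by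
  have hp := hasFPowerSeriesOnBall_regularizedHGFun (a := 0) (b := b) (by simp)
  have hdiff : DifferentiableAt ℂ (regularizedHGFun 0 b) w :=
    (hp.analyticAt_of_mem (by simp)).differentiableAt
  have hderiv : HasSum (fun n ↦ w ^ n * regularizedHGFunCoeff 0 (b.map (· + 1)) n)
      (deriv (regularizedHGFun 0 b) w) := by
    have h := (ContinuousLinearMap.apply ℂ ℂ (1 : ℂ)).hasSum (hp.fderiv.hasSum (y := w) (by simp))
    simpa [natCast_add_one_mul_regularizedHGFunCoeff_add_one] using h
  rw [(hasSum_regularizedHGFun (by simp) w).unique hderiv]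
  exact hdiff.hasDerivAt

/-- The regularized confluent hypergeometric limit function
`₀F₁(; c; w) / Γ(c) = ∑ wⁿ / (n! Γ(c + n))`. With `c = ν + 1` and `w = (z / 2) ^ 2` it is the
entire factor of the Bessel function `I_ν(z)`. -/
noncomputable def regularizedHG01 (c : ℂ) : ℂ → ℂ := regularizedHGFun 0 {c}

lemma hasSum_regularizedHG01 (c w : ℂ) :
    HasSum (fun n : ℕ ↦ w ^ n / (n.factorial * Gamma (c + n))) (regularizedHG01 c w) := by
  simpa [regularizedHG01, regularizedHGFunCoeff, div_eq_mul_inv] using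
    hasSum_regularizedHGFun (a := 0) (b := {c}) (by simp) w

lemma regularizedHG01_zero_right (c : ℂ) : regularizedHG01 c 0 = (Gamma c)⁻¹ := by
  rw [← (hasSum_regularizedHG01 c 0).tsum_eq, tsum_eq_single 0 fun n hn ↦ by simp [hn]]
  simp

lemma hasDerivAt_regularizedHG01 (c w : ℂ) :
    HasDerivAt (regularizedHG01 c) (regularizedHG01 (c + 1) w) w := by
  simpa [regularizedHG01] using hasDerivAt_regularizedHGFun_zero_left {c} w

lemma regularizedHG01_eq_mul_add_mul (c w : ℂ) :
    regularizedHG01 c w = c * regularizedHG01 (c + 1) w + w * regularizedHG01 (c + 2) w := by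
  have hshift (n : ℕ) : w * (w ^ n / (n.factorial * Gamma (c + 2 + n))) =
      (n + 1 : ℕ) * (w ^ (n + 1) / ((n + 1).factorial * Gamma (c + 1 + (n + 1 : ℕ)))) := by
    have hn : (n + 1 : ℂ) ≠ 0 := n.cast_add_one_ne_zero
    rw [Nat.factorial_succ, show c + 1 + (n + 1 : ℕ) = c + 2 + n by push_cast; ring]
    push_cast
    rw [mul_assoc (n + 1 : ℂ), ← mul_div_assoc, ← mul_div_assoc, mul_div_mul_left _ _ hn, pow_succ']
  have hsum : HasSum (fun n : ℕ ↦ n * (w ^ n / (n.factorial * Gamma (c + 1 + n))))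
      (w * regularizedHG01 (c + 2) w) := by
    rw [← hasSum_nat_add_iff' 1]
    simpa only [hshift, Finset.sum_range_one, Nat.cast_zero, zero_mul, sub_zero] using
      (hasSum_regularizedHG01 (c + 2) w).mul_left w
  refine (hasSum_regularizedHG01 c w).unique ?_
  convert! ((hasSum_regularizedHG01 (c + 1) w).mul_left c).add hsum using 2 with n
  rw [← add_mul, div_eq_mul_inv, mul_inv, one_div_Gamma_eq_self_mul_one_div_Gamma_add_one,
    add_right_comm]
  ring

lemma regularizedHG01_mul_sub_mul (μ w : ℂ) :
    regularizedHG01 μ w * regularizedHG01 (1 - μ) w -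
      w * (regularizedHG01 (μ + 1) w * regularizedHG01 (2 - μ) w) = sin (π * μ) / π := by
  have hderiv (x : ℂ) : HasDerivAt (fun x ↦ regularizedHG01 μ x * regularizedHG01 (1 - μ) x -
      x * (regularizedHG01 (μ + 1) x * regularizedHG01 (2 - μ) x)) 0 x := by
    refine (((hasDerivAt_regularizedHG01 μ x).mul (hasDerivAt_regularizedHG01 (1 - μ) x)).sub
      ((hasDerivAt_id x).mul ((hasDerivAt_regularizedHG01 (μ + 1) x).mul
        (hasDerivAt_regularizedHG01 (2 - μ) x)))).congr_deriv ?_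
    have h₁ := regularizedHG01_eq_mul_add_mul μ x
    have h₂ := regularizedHG01_eq_mul_add_mul (1 - μ) x
    rw [show 1 - μ + 1 = 2 - μ by ring, show 1 - μ + 2 = 2 - μ + 1 by ring] at h₂
    rw [show 1 - μ + 1 = 2 - μ by ring, show μ + 1 + 1 = μ + 2 by ring]
    simp only [id, Pi.mul_apply, one_mul]
    linear_combination regularizedHG01 (2 - μ) x * h₁ + regularizedHG01 (μ + 1) x * h₂
  calc _ = regularizedHG01 μ 0 * regularizedHG01 (1 - μ) 0 -
        0 * (regularizedHG01 (μ + 1) 0 * regularizedHG01 (2 - μ) 0) :=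
        is_const_of_deriv_eq_zero (fun x ↦ (hderiv x).differentiableAt)
          (fun x ↦ (hderiv x).deriv) w 0
    _ = sin (π * μ) / π := by
        rw [zero_mul, sub_zero, regularizedHG01_zero_right, regularizedHG01_zero_right, ← mul_inv,
          Gamma_mul_Gamma_one_sub, inv_div]

end RegularizedHypergeometric

section BesselIntegral

open Set Filter Topology Complex
open scoped Real

/-- The function `u ↦ e^(-u - b / u)`, whose Mellin transform is a `K`-Bessel function of `2√b`. -/
noncomputable def besselKernel (b u : ℝ) : ℂ := (Real.exp (-u - b / u) : ℂ)

/-- The integral `∫₀^∞ u^(μ-1) e^(-u - b/u) du`, which represents `2 b^(μ/2) K_μ(2√b)` for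
`b > 0`. -/
noncomputable def besselIntegral (μ : ℂ) (b : ℝ) : ℂ := mellin (besselKernel b) μ

lemma besselKernel_zero : besselKernel 0 = fun u ↦ (Real.exp (-u) : ℂ) := by
  funext u
  rw [besselKernel, zero_div, sub_zero]

lemma continuousOn_besselKernel (b : ℝ) : ContinuousOn (besselKernel b) (Ioi 0) := by
  have hdiv : ContinuousOn (fun u : ℝ ↦ b / u) (Ioi 0) :=
    continuousOn_const.div continuousOn_id fun u hu ↦ (mem_Ioi.1 hu).ne'
  unfold besselKernel
  fun_prop

lemma aestronglyMeasurable_cpow_smul_besselKernel (μ : ℂ) (b : ℝ) :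
    AEStronglyMeasurable (fun u : ℝ ↦ (u : ℂ) ^ μ • besselKernel b u)
      (volume.restrict (Ioi 0)) := by
  have hpow : ContinuousOn (fun u : ℝ ↦ (u : ℂ) ^ μ) (Ioi 0) := fun u hu ↦
    (continuousAt_ofReal_cpow_const u μ (.inr (mem_Ioi.1 hu).ne')).continuousWithinAt
  exact (hpow.smul (continuousOn_besselKernel b)).aestronglyMeasurable measurableSet_Ioi

lemma hasDerivAt_besselKernel (b u : ℝ) :
    HasDerivAt (fun b ↦ besselKernel b u) (-(u : ℂ)⁻¹ * besselKernel b u) b := by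
  have h : HasDerivAt (fun b ↦ Real.exp (-u - b / u)) _ b :=
    (((hasDerivAt_id b).div_const u).const_sub (-u)).exp
  refine h.ofReal_comp.congr_deriv ?_
  simp [besselKernel, mul_comm]

lemma norm_besselKernel_anti {u : ℝ} (hu : 0 ≤ u) : Antitone fun b ↦ ‖besselKernel b u‖ := by
  intro x y hxy
  simp only [besselKernel, norm_real, Real.norm_eq_abs, Real.abs_exp]
  gcongr

lemma mellinConvergent_besselKernel (μ : ℂ) {b : ℝ} (hb : 0 < b) :
    MellinConvergent (besselKernel b) μ := by
  refine mellinConvergent_of_isBigO_rpow_exp (b := μ.re - 1) one_pos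
    ((continuousOn_besselKernel b).locallyIntegrableOn measurableSet_Ioi) ?_ ?_ (by linarith)
  · refine .of_norm_eventuallyLE ?_
    filter_upwards [eventually_ge_atTop 0] with u hu
    refine (norm_besselKernel_anti hu hb.le).trans_eq ?_
    simp only [besselKernel_zero, norm_real, Real.norm_eq_abs, Real.abs_exp, neg_one_mul]
  · have hexp := (isLittleO_exp_neg_mul_rpow_atTop hb (μ.re - 1)).isBigO.comp_tendsto
      (tendsto_inv_nhdsGT_zero (𝕜 := ℝ))
    refine .trans (.of_norm_eventuallyLE ?_) (hexp.congr' .rfl ?_)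
    · filter_upwards [self_mem_nhdsWithin] with u hu
      have hu : 0 < u := hu
      simp only [besselKernel, norm_real, Real.norm_eq_abs, Real.abs_exp, Function.comp_apply]
      gcongr
      rw [neg_mul, ← div_eq_mul_inv]
      linarith
    · filter_upwards [self_mem_nhdsWithin] with u hu
      rw [Function.comp_apply, Real.inv_rpow (mem_Ioi.1 hu).le, Real.rpow_neg (mem_Ioi.1 hu).le]

lemma hasDerivAt_besselIntegral (μ : ℂ) {b : ℝ} (hb : 0 < b) :
    HasDerivAt (besselIntegral μ) (-besselIntegral (μ - 1) b) b := by
  have hint := hasDerivAt_integral_of_dominated_loc_of_deriv_le (𝕜 := ℝ)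
    (bound := fun u : ℝ ↦ ‖(u : ℂ) ^ (μ - 1 - 1) • besselKernel (b / 2) u‖)
    (F := fun x u ↦ (u : ℂ) ^ (μ - 1) • besselKernel x u)
    (F' := fun x u ↦ -((u : ℂ) ^ (μ - 1 - 1) • besselKernel x u))
    (Ioi_mem_nhds (half_lt_self hb))
    (.of_forall fun x ↦ aestronglyMeasurable_cpow_smul_besselKernel (μ - 1) x)
    (mellinConvergent_besselKernel μ hb)
    (aestronglyMeasurable_cpow_smul_besselKernel (μ - 1 - 1) b).neg ?_
    (mellinConvergent_besselKernel (μ - 1) (half_pos hb)).norm ?_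
  · refine hint.2.congr_deriv ?_
    rw [integral_neg]
    rfl
  · refine ae_restrict_of_forall_mem measurableSet_Ioi fun u hu x hx ↦ ?_
    rw [norm_neg, norm_smul, norm_smul]
    gcongr
    exact norm_besselKernel_anti (mem_Ioi.1 hu).le (mem_Ioi.1 hx).le
  · refine ae_restrict_of_forall_mem measurableSet_Ioi fun u hu x _ ↦ ?_
    refine ((hasDerivAt_besselKernel x u).const_smul ((u : ℂ) ^ (μ - 1))).congr_deriv ?_
    rw [cpow_sub (μ - 1) 1 (ofReal_ne_zero.2 (mem_Ioi.1 hu).ne'), cpow_one]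
    simp only [smul_eq_mul]
    ring

lemma besselIntegral_zero_right {μ : ℂ} (hμ : 0 < μ.re) : besselIntegral μ 0 = Gamma μ := by
  rw [Gamma_eq_integral hμ, GammaIntegral_eq_mellin, besselIntegral, besselKernel_zero]

lemma tendsto_besselIntegral_nhdsGT_zero {μ : ℂ} (hμ : 0 < μ.re) :
    Tendsto (besselIntegral μ) (𝓝[>] 0) (𝓝 (Gamma μ)) := by
  have hint : MellinConvergent (besselKernel 0) μ := by
    simpa [MellinConvergent, besselKernel_zero, mul_comm] using GammaIntegral_convergent hμ
  rw [← besselIntegral_zero_right hμ]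
  refine tendsto_integral_filter_of_dominated_convergence _
    (.of_forall fun x ↦ aestronglyMeasurable_cpow_smul_besselKernel (μ - 1) x) ?_ hint.norm ?_
  · filter_upwards [self_mem_nhdsWithin] with x hx
    refine ae_restrict_of_forall_mem measurableSet_Ioi fun u hu ↦ ?_
    rw [norm_smul, norm_smul]
    gcongr
    exact norm_besselKernel_anti (mem_Ioi.1 hu).le (mem_Ioi.1 hx).le
  · refine .of_forall fun u ↦ ?_
    exact ((hasDerivAt_besselKernel 0 u).continuousAt.const_smul ((u : ℂ) ^ (μ - 1))).mono_left
      nhdsWithin_le_nhds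

lemma besselIntegral_eq_cpow_mul_neg (μ : ℂ) {b : ℝ} (hb : 0 < b) :
    besselIntegral μ b = (b : ℂ) ^ μ * besselIntegral (-μ) b := by
  have hinv (u : ℝ) (hu : 0 < u) : besselKernel b u = besselKernel b (b * u⁻¹) := by
    have : -u - b / u = -(b * u⁻¹) - b / (b * u⁻¹) := by
      field_simp
      ring
    rw [besselKernel, this, besselKernel]
  calc besselIntegral μ b = mellin (fun u ↦ besselKernel b (b * u⁻¹)) μ :=
        setIntegral_congr_fun measurableSet_Ioi fun u hu ↦ by simp only [hinv u hu]
    _ = mellin (fun u ↦ besselKernel b (b * u)) (-μ) :=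
        mellin_comp_inv (fun u ↦ besselKernel b (b * u)) μ
    _ = _ := by rw [mellin_comp_mul_left _ _ hb, neg_neg, smul_eq_mul, besselIntegral]

lemma besselIntegral_add_one (μ : ℂ) {b : ℝ} (hb : 0 < b) :
    besselIntegral (μ + 1) b = μ * besselIntegral μ b + b * besselIntegral (μ - 1) b := by
  -- The recurrence is the derivative in `b` of `besselIntegral_eq_cpow_mul_neg`.
  have hb₀ : (b : ℂ) ≠ 0 := ofReal_ne_zero.2 hb.ne'
  have hderiv : HasDerivAt (besselIntegral μ) (μ * (b : ℂ) ^ (μ - 1) * besselIntegral (-μ) b +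
      (b : ℂ) ^ μ * -besselIntegral (-μ - 1) b) b := by
    have hpow := (hasDerivAt_id (b : ℂ)).cpow_const (c := μ) (.inl (by simpa using hb))
    refine HasDerivAt.congr_of_eventuallyEq ((hpow.comp_ofReal.mul
      (hasDerivAt_besselIntegral (-μ) hb)).congr_deriv (by simp)) ?_
    filter_upwards [Ioi_mem_nhds hb] with x hx using besselIntegral_eq_cpow_mul_neg μ hx
  have h := (hasDerivAt_besselIntegral μ hb).unique hderiv
  rw [cpow_sub μ 1 hb₀, cpow_one] at h
  have h₀ := besselIntegral_eq_cpow_mul_neg μ hb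
  have h₁ := besselIntegral_eq_cpow_mul_neg (μ + 1) hb
  rw [cpow_add μ 1 hb₀, cpow_one, neg_add'] at h₁
  field_simp at h
  linear_combination h - μ * h₀ + h₁

lemma mellin_exp_neg_mul_sub_div (μ : ℂ) {a : ℝ} (ha : 0 < a) (c : ℝ) :
    mellin (fun u ↦ (Real.exp (-(a * u) - c / u) : ℂ)) μ =
      (a : ℂ) ^ (-μ) * besselIntegral μ (a * c) := by
  rw [besselIntegral, ← smul_eq_mul, ← mellin_comp_mul_left _ _ ha]
  simp only [besselKernel, mul_div_mul_left _ _ ha.ne']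

/-- The Wronskian `z (K_μ(z) I_(μ-1)(z) + K_(μ-1)(z) I_μ(z))` of the Bessel functions at
`z = 2√b`, with `K` and `I` expressed through `besselIntegral` and `regularizedHG01`. -/
noncomputable def besselWronskian (μ : ℂ) (b : ℝ) : ℂ :=
  besselIntegral μ b * regularizedHG01 μ b +
    b * (besselIntegral (μ - 1) b * regularizedHG01 (μ + 1) b)

lemma besselWronskian_add_one (μ : ℂ) {b : ℝ} (hb : 0 < b) :
    besselWronskian (μ + 1) b = besselWronskian μ b := by
  rw [besselWronskian, besselWronskian, add_sub_cancel_right, besselIntegral_add_one μ hb,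
    regularizedHG01_eq_mul_add_mul μ, add_assoc μ, one_add_one_eq_two]
  ring

lemma hasDerivAt_besselWronskian (μ : ℂ) {b : ℝ} (hb : 0 < b) :
    HasDerivAt (besselWronskian μ) 0 b := by
  refine (((hasDerivAt_besselIntegral μ hb).mul (hasDerivAt_regularizedHG01 μ b).comp_ofReal).add
    ((hasDerivAt_id b).ofReal_comp.mul ((hasDerivAt_besselIntegral (μ - 1) hb).mul
      (hasDerivAt_regularizedHG01 (μ + 1) b).comp_ofReal))).congr_deriv ?_
  have hG := besselIntegral_add_one (μ - 1) hb
  have hF := regularizedHG01_eq_mul_add_mul μ b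
  rw [sub_add_cancel] at hG
  simp only [Pi.mul_apply, id, add_assoc μ, one_add_one_eq_two, ofReal_one]
  linear_combination regularizedHG01 (μ + 1) b * hG - besselIntegral (μ - 1) b * hF

lemma tendsto_besselWronskian_nhdsGT_zero {μ : ℂ} (hμ : 1 < μ.re) :
    Tendsto (besselWronskian μ) (𝓝[>] 0) (𝓝 1) := by
  have hid : Tendsto (fun b : ℝ ↦ (b : ℂ)) (𝓝[>] 0) (𝓝 0) :=
    (continuous_ofReal.tendsto' 0 0 rfl).mono_left nhdsWithin_le_nhds
  have hF (c : ℂ) : Tendsto (fun b : ℝ ↦ regularizedHG01 c b) (𝓝[>] 0) (𝓝 (Gamma c)⁻¹) := by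
    rw [← regularizedHG01_zero_right]
    exact (hasDerivAt_regularizedHG01 c 0).continuousAt.tendsto.comp hid
  have hG₀ := tendsto_besselIntegral_nhdsGT_zero (one_pos.trans hμ)
  have hG₁ := tendsto_besselIntegral_nhdsGT_zero (μ := μ - 1) (by simpa using hμ)
  convert! (hG₀.mul (hF μ)).add (hid.mul (hG₁.mul (hF (μ + 1)))) using 2
  rw [zero_mul, add_zero, mul_inv_cancel₀ (Gamma_ne_zero_of_re_pos (one_pos.trans hμ))]

theorem besselWronskian_eq_one (μ : ℂ) {b : ℝ} (hb : 0 < b) : besselWronskian μ b = 1 := by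
  have of_one_lt_re {μ : ℂ} (hμ : 1 < μ.re) : besselWronskian μ b = 1 := by
    have hconst : ∀ᶠ x in 𝓝[>] 0, besselWronskian μ b = besselWronskian μ x := by
      filter_upwards [self_mem_nhdsWithin] with x hx
      exact isOpen_Ioi.is_const_of_deriv_eq_zero isPreconnected_Ioi
        (fun y hy ↦ (hasDerivAt_besselWronskian μ hy).differentiableAt.differentiableWithinAt)
        (fun y hy ↦ (hasDerivAt_besselWronskian μ hy).deriv) hb hx
    exact tendsto_nhds_unique (tendsto_const_nhds.congr' hconst)
      (tendsto_besselWronskian_nhdsGT_zero hμ)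
  obtain ⟨n, hn⟩ := exists_nat_gt (1 - μ.re)
  have hper : Function.Periodic (besselWronskian · b) 1 := fun ν ↦ besselWronskian_add_one ν hb
  rw [← show besselWronskian (μ + n) b = besselWronskian μ b by simpa using hper.nat_mul n μ]
  refine of_one_lt_re ?_
  rw [add_re, natCast_re]
  linarith

theorem sin_mul_besselIntegral (μ : ℂ) {b : ℝ} (hb : 0 < b) :
    sin (π * μ) / π * besselIntegral μ b =
      regularizedHG01 (1 - μ) b - (b : ℂ) ^ μ * regularizedHG01 (1 + μ) b := by
  have hb₀ : (b : ℂ) ≠ 0 := ofReal_ne_zero.2 hb.ne'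
  have hW := besselWronskian_eq_one μ hb
  have hW' := besselWronskian_eq_one (1 - μ) hb
  have hG := besselIntegral_eq_cpow_mul_neg μ hb
  have hG' := besselIntegral_eq_cpow_mul_neg (μ - 1) hb
  rw [besselWronskian, show 1 - μ - 1 = -μ by ring, show 1 - μ + 1 = 2 - μ by ring] at hW'
  rw [besselWronskian] at hW
  rw [cpow_sub μ 1 hb₀, cpow_one, neg_sub] at hG'
  field_simp at hG'
  rw [← regularizedHG01_mul_sub_mul μ b, add_comm 1 μ]
  -- Cramer's rule with the unknowns `besselIntegral μ b` and `besselIntegral (μ - 1) b`.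
  linear_combination regularizedHG01 (1 - μ) b * hW
    - (b : ℂ) ^ μ * regularizedHG01 (μ + 1) b * hW'
    - b * regularizedHG01 (2 - μ) b * regularizedHG01 (μ + 1) b * hG
    - regularizedHG01 (1 - μ) b * regularizedHG01 (μ + 1) b * hG'

end BesselIntegral

section BesselK

open Complex
open scoped Real

lemma ofReal_sq_cpow {a : ℝ} (ha : 0 ≤ a) (c : ℂ) : ((a ^ 2 : ℝ) : ℂ) ^ c = (a : ℂ) ^ (2 * c) := by
  rw [mul_comm, cpow_mul_ofNat, sq, ofReal_mul, mul_cpow_ofReal_nonneg ha ha, sq]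

lemma besselI_eq_cpow_mul_regularizedHG01 (ν : ℂ) (z : ℝ) :
    besselI ν z = ((z : ℂ) / 2) ^ ν * regularizedHG01 (1 + ν) ((z / 2) ^ 2 : ℝ) := by
  rw [besselI, ← (hasSum_regularizedHG01 _ _).tsum_eq]
  congr! 3 with j
  push_cast
  rw [pow_mul, add_comm 1 ν, add_rotate]

lemma besselK_neg (ν : ℂ) (z : ℝ) : besselK (-ν) z = besselK ν z := by
  rw [besselK, besselK, neg_neg, neg_mul, sin_neg, mul_neg, div_neg]
  ring

theorem besselKt_eq_cpow_mul_besselKt_neg (ν : ℂ) {z : ℝ} (hz : z ≠ 0) :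
    besselKt ν z = ((z : ℂ) / 2) ^ (-2 * ν) * besselKt (-ν) z := by
  have hw : (z : ℂ) / 2 ≠ 0 := div_ne_zero (ofReal_ne_zero.2 hz) two_ne_zero
  rw [besselKt, besselKt, besselK_neg, ← mul_assoc, ← cpow_add _ _ hw]
  ring_nf

theorem two_mul_besselKt {ν : ℂ} (hν : ∀ q : ℤ, ν ≠ q) {z : ℝ} (hz : 0 < z) :
    2 * besselKt ν z = besselIntegral (-ν) ((z / 2) ^ 2) := by
  have hsin : sin (π * ν) ≠ 0 := by
    refine sin_ne_zero_iff.2 fun q hq ↦ hν q ?_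
    rw [mul_comm (q : ℂ)] at hq
    exact mul_left_cancel₀ (ofReal_ne_zero.2 Real.pi_ne_zero) hq
  have hw : (z : ℂ) / 2 ≠ 0 := div_ne_zero (ofReal_ne_zero.2 hz.ne') two_ne_zero
  have hG := sin_mul_besselIntegral (-ν) (b := (z / 2) ^ 2) (by positivity)
  rw [ofReal_sq_cpow (by positivity), two_mul, ofReal_div, ofReal_ofNat, cpow_add _ _ hw,
    mul_neg, sin_neg, sub_neg_eq_add, ← sub_eq_add_neg] at hG
  rw [besselKt, besselK, besselI_eq_cpow_mul_regularizedHG01,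
    besselI_eq_cpow_mul_regularizedHG01, mul_comm ν, ← sub_eq_add_neg]
  have hinv : ((z : ℂ) / 2) ^ (-ν) * ((z : ℂ) / 2) ^ ν = 1 := by
    rw [← cpow_add _ _ hw, neg_add_cancel, cpow_zero]
  set b : ℝ := (z / 2) ^ 2
  field_simp at hG ⊢
  linear_combination hG - π * regularizedHG01 (1 + ν) b * hinv

end BesselK

section Fourier

open Set Complex Module
open scoped Real

variable {V : Type*} [NormedAddCommGroup V] [InnerProductSpace ℝ V]

/-- The integrand `u^(s-1) e^(-r u) e^(-u ‖x‖² - i⟪ξ, x⟫)` that represents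
`Γ(s) (‖x‖² + r)^(-s) e^(-i⟪ξ, x⟫)` as a superposition over `u > 0` of Gaussians in `x`. -/
noncomputable def subordinationKernel (s : ℂ) (r : ℝ) (ξ x : V) (u : ℝ) : ℂ :=
  (u : ℂ) ^ (s - 1) * (Real.exp (-(r * u)) : ℂ) * cexp (-u * ‖x‖ ^ 2 + -I * ⟪ξ, x⟫_ℝ)

lemma norm_subordinationKernel (s : ℂ) (r : ℝ) (ξ x : V) {u : ℝ} (hu : 0 < u) :
    ‖subordinationKernel s r ξ x u‖ =
      u ^ (s.re - 1) * Real.exp (-(r * u)) * Real.exp (-u * ‖x‖ ^ 2) := by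
  have hre : (-u * ‖x‖ ^ 2 + -I * ⟪ξ, x⟫_ℝ : ℂ).re = -u * ‖x‖ ^ 2 := by
    simp [← ofReal_pow]
  rw [subordinationKernel, norm_mul, norm_mul, norm_cpow_eq_rpow_re_of_pos hu, norm_exp, hre,
    norm_real, Real.norm_eq_abs, Real.abs_exp, sub_re, one_re]

lemma integral_Ioi_subordinationKernel {s : ℂ} (hs : 0 < s.re) {r : ℝ} (hr : 0 < r) (ξ x : V) :
    ∫ u in Ioi (0 : ℝ), subordinationKernel s r ξ x u =
      Gamma s * (((‖x‖ ^ 2 + r : ℝ) : ℂ) ^ (-s) * cexp (-I * ⟪x, ξ⟫_ℝ)) := by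
  have hpos : 0 < ‖x‖ ^ 2 + r := by positivity
  have hsplit (u : ℝ) : subordinationKernel s r ξ x u =
      (u : ℂ) ^ (s - 1) * cexp (-((‖x‖ ^ 2 + r : ℝ) * u)) * cexp (-I * ⟪x, ξ⟫_ℝ) := by
    rw [subordinationKernel, ofReal_exp, mul_assoc, mul_assoc, ← Complex.exp_add,
      ← Complex.exp_add, real_inner_comm]
    push_cast
    ring_nf
  have harg : ((‖x‖ ^ 2 + r : ℝ) : ℂ).arg ≠ π := by
    rw [arg_ofReal_of_nonneg hpos.le]
    exact Real.pi_ne_zero.symm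
  simp only [hsplit]
  rw [integral_mul_const, integral_cpow_mul_exp_neg_mul_Ioi hs hpos, one_div,
    inv_cpow _ _ harg, cpow_neg]
  ring

variable [FiniteDimensional ℝ V] [MeasurableSpace V] [BorelSpace V]

lemma integrable_subordinationKernel_left (s : ℂ) (r : ℝ) (ξ : V) {u : ℝ} (hu : 0 < u) :
    Integrable (subordinationKernel s r ξ · u) :=
  (GaussianFourier.integrable_cexp_neg_mul_sq_norm_add (by simpa using hu) (-I) ξ).const_mul _

lemma integral_subordinationKernel (s : ℂ) (r : ℝ) (ξ : V) {u : ℝ} (hu : 0 < u) :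
    ∫ x, subordinationKernel s r ξ x u = (π : ℂ) ^ ((finrank ℝ V : ℂ) / 2) *
      ((u : ℂ) ^ (s - finrank ℝ V / 2 - 1) * (Real.exp (-(r * u) - ‖ξ‖ ^ 2 / 4 / u) : ℂ)) := by
  have hu₀ : (u : ℂ) ≠ 0 := ofReal_ne_zero.2 hu.ne'
  simp only [subordinationKernel]
  rw [integral_const_mul,
    GaussianFourier.integral_cexp_neg_mul_sq_norm_add (by simpa using hu), neg_sq, I_sq,
    ← ofReal_div, ofReal_div, div_cpow_ofReal_nonneg Real.pi_pos.le hu.le, sub_right_comm,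
    cpow_sub (s - 1) _ hu₀, sub_eq_add_neg (-(r * u)), Real.exp_add,
    show (-1 * ‖ξ‖ ^ 2 / (4 * u) : ℂ) = (-(‖ξ‖ ^ 2 / 4 / u) : ℝ) by push_cast; field_simp]
  push_cast
  ring

lemma integrable_subordinationKernel {s : ℂ} (hs : (finrank ℝ V : ℝ) / 2 < s.re) {r : ℝ}
    (hr : 0 < r) (ξ : V) :
    Integrable (fun p : V × ℝ ↦ subordinationKernel s r ξ p.1 p.2)
      (volume.prod (volume.restrict (Ioi 0))) := by
  have hmeas : Measurable fun p : V × ℝ ↦ subordinationKernel s r ξ p.1 p.2 := by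
    unfold subordinationKernel
    fun_prop
  refine (integrable_prod_iff' hmeas.aestronglyMeasurable).2 ⟨?_, ?_⟩
  · exact ae_restrict_of_forall_mem measurableSet_Ioi fun u hu ↦
      integrable_subordinationKernel_left s r ξ hu
  · have hgamma := (integrableOn_rpow_mul_exp_neg_mul_rpow (p := 1)
      (s := s.re - 1 - finrank ℝ V / 2) (b := r) (by linarith) one_pos hr).const_mul
      (π ^ (finrank ℝ V / 2 : ℝ))
    refine hgamma.congr (ae_restrict_of_forall_mem measurableSet_Ioi fun u hu ↦ ?_)
    have hu : 0 < u := hu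
    simp only [norm_subordinationKernel s r ξ _ hu]
    rw [integral_const_mul, GaussianFourier.integral_rexp_neg_mul_sq_norm hu,
      Real.div_rpow Real.pi_pos.le hu.le, Real.rpow_sub hu, Real.rpow_one, neg_mul]
    ring

theorem integral_cpow_neg_mul_cexp_inner {s : ℂ} (hs : (finrank ℝ V : ℝ) / 2 < s.re) {r : ℝ}
    (hr : 0 < r) (ξ : V) :
    ∫ x : V, ((‖x‖ ^ 2 + r : ℝ) : ℂ) ^ (-s) * cexp (-I * ⟪x, ξ⟫_ℝ) =
      (π : ℂ) ^ ((finrank ℝ V : ℂ) / 2) / Gamma s * ((r : ℂ) ^ ((finrank ℝ V : ℂ) / 2 - s) *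
        besselIntegral (s - finrank ℝ V / 2) (r * (‖ξ‖ ^ 2 / 4))) := by
  have hs₀ : 0 < s.re := lt_of_le_of_lt (by positivity) hs
  rw [div_mul_eq_mul_div, eq_div_iff (Gamma_ne_zero_of_re_pos hs₀), mul_comm _ (Gamma s)]
  calc _ = ∫ x : V, ∫ u in Ioi (0 : ℝ), subordinationKernel s r ξ x u := by
        simp only [integral_Ioi_subordinationKernel hs₀ hr, integral_const_mul]
    _ = ∫ u in Ioi (0 : ℝ), ∫ x : V, subordinationKernel s r ξ x u :=
        integral_integral_swap (integrable_subordinationKernel hs hr ξ)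
    _ = (π : ℂ) ^ ((finrank ℝ V : ℂ) / 2) * mellin
          (fun u ↦ (Real.exp (-(r * u) - ‖ξ‖ ^ 2 / 4 / u) : ℂ)) (s - finrank ℝ V / 2) := by
        rw [mellin, ← integral_const_mul]
        exact setIntegral_congr_fun measurableSet_Ioi fun u hu ↦
          integral_subordinationKernel s r ξ hu
    _ = _ := by rw [mellin_exp_neg_mul_sub_div _ hr, neg_sub]

theorem stmt_19_general {m : ℕ} (hm : finrank ℝ V = m) {lam : ℂ}
    (hlam : lam.re < -(m : ℝ) / 2) {t : ℝ} (ht : t ≠ 0) {ξ : V} (hξ : ξ ≠ 0)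
    (hord : ∀ q : ℤ, (m : ℂ) / 2 + lam ≠ q) :
    (∫ x : V, ((‖x‖ ^ 2 + t ^ 2 : ℝ) : ℂ) ^ lam * cexp (-I * (⟪x, ξ⟫_ℝ : ℂ))) =
        2 * ((|t| : ℝ) : ℂ) ^ ((m : ℂ) + 2 * lam) * (π : ℂ) ^ ((m : ℂ) / 2) / Gamma (-lam) *
          besselKt ((m : ℂ) / 2 + lam) (|t| * ‖ξ‖) ∧
      ∀ (ν : ℂ) (z : ℝ), z ≠ 0 →
        besselKt ν z = ((z : ℂ) / 2) ^ (-2 * ν) * besselKt (-ν) z := by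
  refine ⟨?_, fun ν z hz ↦ besselKt_eq_cpow_mul_besselKt_neg ν hz⟩
  have hs : (finrank ℝ V : ℝ) / 2 < (-lam).re := by
    rw [hm, neg_re]
    linarith
  have hpow : ((t ^ 2 : ℝ) : ℂ) ^ ((m : ℂ) / 2 + lam) = ((|t| : ℝ) : ℂ) ^ ((m : ℂ) + 2 * lam) := by
    rw [← sq_abs, ofReal_sq_cpow (abs_nonneg t), mul_add, mul_div_cancel₀ _ two_ne_zero]
  have harg : t ^ 2 * (‖ξ‖ ^ 2 / 4) = (|t| * ‖ξ‖ / 2) ^ 2 := by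
    rw [← sq_abs t]
    ring
  have hF := integral_cpow_neg_mul_cexp_inner hs (sq_pos_of_ne_zero ht) ξ
  have hK := two_mul_besselKt hord (mul_pos (abs_pos.2 ht) (norm_pos_iff.2 hξ))
  rw [hm, neg_neg, sub_neg_eq_add, hpow, harg, ← neg_add', add_comm lam, ← hK] at hF
  rw [hF]
  ring

end Fourier

theorem stmt_19 (m : ℕ) (hm : 1 ≤ m) (lam : ℂ) (hlam : lam.re < -(m : ℝ) / 2)
    (t : ℝ) (ht : t ≠ 0) (ξ : EuclideanSpace ℝ (Fin m)) (hξ : ξ ≠ 0)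
    (hord : ∀ q : ℤ, (m : ℂ) / 2 + lam ≠ q) :
    (∫ x : EuclideanSpace ℝ (Fin m),
        ((‖x‖ ^ 2 + t ^ 2 : ℝ) : ℂ) ^ lam * Complex.exp (-Complex.I * (⟪x, ξ⟫_ℝ : ℂ))) =
        2 * ((|t| : ℝ) : ℂ) ^ ((m : ℂ) + 2 * lam) * (Real.pi : ℂ) ^ ((m : ℂ) / 2) /
          Complex.Gamma (-lam) * besselKt ((m : ℂ) / 2 + lam) (|t| * ‖ξ‖) ∧
      ∀ (ν : ℂ) (z : ℝ), 0 < z →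
        besselKt ν z = ((z : ℂ) / 2) ^ (-2 * ν) * besselKt (-ν) z :=
  (stmt_19_general finrank_euclideanSpace_fin hlam ht hξ hord).imp_right
    fun h ν z hz ↦ h ν z hz.ne'
end
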